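/- Let p ≥ 1 and μ, λ ∈ ℝᵖ. Define π_p(μ, λ) = Σ_{k=0}^{p} σ_k(μ + X·𝟙)·σ_{p-k}(λ + X·𝟙) / C(p,k) ∈ ℝ[X], where σ_j acts on p variables. Then π_p(μ, λ) = Σ_{l=0}^{p} ( Σ_{i=0}^{p-l} ( (p-i)!·(l+i)! ) / ( p!·l! ) · σ_{p-l-i}(μ)·σ_i(λ) ) · (2X)ˡ. -/

import Mathlib

open Polynomial

/-- The `k`-th elementary symmetric polynomial in `p` real variables. -/
noncomputable def esymm (p k : ℕ) (x : Fin p → ℝ) : ℝ :=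
  ∑ s ∈ Finset.powersetCard k (Finset.univ : Finset (Fin p)), ∏ i ∈ s, x i

/-- The univariate polynomial `σ_k(x₁ + X, …, x_p + X)`. -/
noncomputable def esymmPoly (p k : ℕ) (x : Fin p → ℝ) : Polynomial ℝ :=
  ∑ s ∈ Finset.powersetCard k (Finset.univ : Finset (Fin p)), ∏ i ∈ s, (X + C (x i))

theorem aux_prod {A : Type*} [CommRing A] (p : ℕ) (x : Fin p → A) (y : A) :
    ∏ i, (x i + y) = ∑ j ∈ Finset.range (p + 1),
      (∑ s ∈ Finset.powersetCard j (Finset.univ : Finset (Fin p)), ∏ i ∈ s, x i) * y ^ (p - j) := by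
  rw [Finset.prod_add, Finset.sum_powerset]
  simp only [Finset.card_univ, Fintype.card_fin]
  refine Finset.sum_congr rfl fun j _ => ?_
  rw [Finset.sum_mul]
  refine Finset.sum_congr rfl fun s hs => ?_
  rw [Finset.mem_powersetCard] at hs
  rw [Finset.prod_const, Finset.card_sdiff_of_subset hs.1, hs.2]
  simp

theorem aux_poly (p k : ℕ) (hk : k ≤ p) (x : Fin p → ℝ) :
    esymmPoly p k x = ∑ j ∈ Finset.range (k + 1),
      C (((p - j).choose (k - j) : ℝ) * esymm p j x) * X ^ (k - j) := by
  have h1 := Finset.prod_X_add_C_coeff (Finset.univ : Finset (Fin p))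
    (fun i => (X + C (x i) : ℝ[X])) (k := p - k) (by simp)
  simp only [Finset.card_univ, Fintype.card_fin, Nat.sub_sub_self hk] at h1
  have h2 := aux_prod p (fun i => (C (C (x i)) : ℝ[X][X])) (X + C X)
  have h3 : ∏ i, ((X : ℝ[X][X]) + C (X + C (x i))) = ∏ i, (C (C (x i)) + (X + C X)) := by
    refine Finset.prod_congr rfl fun i _ => ?_
    rw [C_add]; ring
  rw [h3, h2] at h1
  unfold esymmPoly
  rw [← h1, finsetSum_coeff]
  have h4 : ∀ j, (∑ s ∈ Finset.powersetCard j (Finset.univ : Finset (Fin p)),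
      ∏ i ∈ s, (C (C (x i)) : ℝ[X][X])) = C (C (esymm p j x)) := by
    intro j; simp [esymm, map_sum, map_prod]
  simp only [h4, coeff_C_mul, coeff_X_add_C_pow]
  symm
  refine Finset.sum_subset_zero_on_sdiff (Finset.range_subset_range.2 (by omega)) ?_ ?_
  · intro j hj
    simp only [Finset.mem_sdiff, Finset.mem_range] at hj
    rw [Nat.choose_eq_zero_of_lt (by omega)]; simp
  · intro j hj
    simp only [Finset.mem_range] at hj
    have e1 : p - j - (p - k) = k - j := by omega
    have e2 : (p - j).choose (p - k) = (p - j).choose (k - j) := by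
      rw [← e1, Nat.choose_symm (by omega)]
    rw [e1, e2, C_mul]
    simp only [map_natCast]
    ring

theorem aux_coef (p a b m l : ℕ) (h : a + b + l = p) (hm : m ≤ l) :
    ((p.choose (a + m) : ℝ))⁻¹ * (((p - a).choose m : ℝ) * ((p - b).choose (l - m) : ℝ))
      = (((p - b).factorial : ℝ) * ((l + b).factorial : ℝ))
                / ((p.factorial : ℝ) * (l.factorial : ℝ)) * (l.choose m : ℝ) := by
  obtain ⟨n, rfl⟩ := Nat.exists_eq_add_of_le hm
  subst h
  rw [show a + b + (m + n) - a = m + (b + n) by omega,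
    show a + b + (m + n) - b = n + (a + m) by omega, show m + n - m = n by omega,
    show a + b + (m + n) = (a + m) + (b + n) by omega,
    show m + n + b = m + (b + n) by omega]
  simp only [Nat.cast_add_choose]
  have := fun n : ℕ => (Nat.cast_ne_zero (R := ℝ)).2 (Nat.factorial_ne_zero n)
  have h1 := this (a + m)
  have h2 := this (b + n)
  have h3 := this m
  have h4 := this n
  have h5 := this (m + n)
  have h6 := this (a + m + (b + n))
  field_simp

theorem stmt17 (p : ℕ) (hp : 1 ≤ p) (μ lam : Fin p → ℝ) :
    ∑ k ∈ Finset.range (p + 1),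
        C ((p.choose k : ℝ))⁻¹ * (esymmPoly p k μ * esymmPoly p (p - k) lam)
      = ∑ l ∈ Finset.range (p + 1),
          C (∑ i ∈ Finset.range (p - l + 1),
              (((p - i).factorial : ℝ) * ((l + i).factorial : ℝ))
                / ((p.factorial : ℝ) * (l.factorial : ℝ))
              * esymm p (p - l - i) μ * esymm p i lam)
            * (C (2 : ℝ) * X) ^ l := by
  have hL : ∀ k ∈ Finset.range (p + 1),
      C ((p.choose k : ℝ))⁻¹ * (esymmPoly p k μ * esymmPoly p (p - k) lam)
      = ∑ a ∈ Finset.range (k + 1), ∑ b ∈ Finset.range (p - k + 1),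
        C (((p.choose k : ℝ))⁻¹ * (((p - a).choose (k - a) : ℝ) * ((p - b).choose (p - k - b) : ℝ))
          * esymm p a μ * esymm p b lam) * X ^ (p - a - b) := by
    intro k hk
    simp only [Finset.mem_range] at hk
    rw [aux_poly p k (by omega), aux_poly p (p - k) (by omega), Finset.sum_mul_sum, Finset.mul_sum]
    refine Finset.sum_congr rfl fun a ha => ?_
    rw [Finset.mul_sum]
    refine Finset.sum_congr rfl fun b hb => ?_
    simp only [Finset.mem_range] at ha hb
    rw [show p - a - b = (k - a) + (p - k - b) by omega, pow_add]
    simp only [C_mul]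
    ring
  have hR : ∀ l ∈ Finset.range (p + 1),
      C (∑ i ∈ Finset.range (p - l + 1),
              (((p - i).factorial : ℝ) * ((l + i).factorial : ℝ))
                / ((p.factorial : ℝ) * (l.factorial : ℝ))
              * esymm p (p - l - i) μ * esymm p i lam)
            * (C (2 : ℝ) * X) ^ l
      = ∑ i ∈ Finset.range (p - l + 1), ∑ m ∈ Finset.range (l + 1),
        C ((((p - i).factorial : ℝ) * ((l + i).factorial : ℝ))
                / ((p.factorial : ℝ) * (l.factorial : ℝ)) * (l.choose m : ℝ)
              * esymm p (p - l - i) μ * esymm p i lam) * X ^ l := by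
    intro l _
    rw [map_sum, Finset.sum_mul]
    refine Finset.sum_congr rfl fun i _ => ?_
    have h2 : (2 : ℝ) ^ l = ∑ m ∈ Finset.range (l + 1), (l.choose m : ℝ) := by
      exact_mod_cast (Nat.sum_range_choose l).symm
    rw [mul_pow, ← C_pow, h2, ← mul_assoc, ← C_mul, Finset.mul_sum, map_sum, Finset.sum_mul]
    refine Finset.sum_congr rfl fun m _ => ?_
    congr 2
    ring
  rw [Finset.sum_congr rfl hL, Finset.sum_congr rfl hR]
  simp only [Finset.sum_sigma']
  refine Finset.sum_nbij' (fun t => ⟨p - t.2.1 - t.2.2, t.2.2, t.1 - t.2.1⟩)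
    (fun t => ⟨p - t.1 - t.2.1 + t.2.2, p - t.1 - t.2.1, t.2.1⟩) ?_ ?_ ?_ ?_ ?_
  · rintro ⟨k, a, b⟩ h
    simp only [Finset.mem_sigma, Finset.mem_range] at h ⊢
    omega
  · rintro ⟨l, i, m⟩ h
    simp only [Finset.mem_sigma, Finset.mem_range] at h ⊢
    omega
  · rintro ⟨k, a, b⟩ h
    simp only [Finset.mem_sigma, Finset.mem_range] at h
    have e1 : p - (p - a - b) - b = a := by omega
    have e2 : a + (k - a) = k := by omega
    simp only [e1, e2]
  · rintro ⟨l, i, m⟩ h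
    simp only [Finset.mem_sigma, Finset.mem_range] at h
    have e1 : p - (p - l - i) - i = l := by omega
    have e2 : p - l - i + m - (p - l - i) = m := by omega
    simp only [e1, e2]
  · rintro ⟨k, a, b⟩ h
    simp only [Finset.mem_sigma, Finset.mem_range] at h
    have e1 : p - (p - a - b) - b = a := by omega
    have e2 : a + (k - a) = k := by omega
    have e3 : p - a - b - (k - a) = p - k - b := by omega
    have := aux_coef p a b (k - a) (p - a - b) (by omega) (by omega)
    rw [e2, e3] at this
    simp only [e1]
    rw [this]
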